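/- Let R be a commutative Noetherian local ring, X an R-module, and let 0 → L →f M →g N → 0 be a short exact sequence of finitely generated R-modules. Then there exist an integer n ≥ 0 and an exact sequence 0 → Hom_R(N,X) →Hom(g,X) Hom_R(M,X) →Hom(f,X) Hom_R(L,X) → tr_X N → tr_X M ⊕ X^{⊕n} → tr_X L → 0. -/

import Mathlib

/-!
Take minimal free presentations `dL`, `dN` of `L` and `N`. The horseshoe lemma
(`exists_horseshoe`) gives a free presentation `d = [[dL, t], [0, dN]]` of `M`. Applying
`Hom(-, X)` yields two split short exact rows joined by the transposed presentation maps, and the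
snake lemma (`exists_snake`, with explicit connecting map `l ↦ [l ∘ πL ∘ t]`) produces the exact
sequence with `coker Hom(d, X)` in place of `tr_X M ⊕ X^n`.

The presentation `d` need not be minimal, but over a local ring it is the direct sum of a minimal
one, an identity map of a free module, and a map from a free module of some rank `n` to zero. The
identity contributes nothing to the cokernel of `Hom(d, X)`, and the last summand contributes
`X^n`; hence `coker Hom(d, X) ≅ tr_X M ⊕ X^n` (`exists_coker_lcomp_equiv`).
-/

open TensorProduct

noncomputable section

/-- The nonfree locus of a module: primes where the localization is a nonfree module. -/
def nonfreeLocus (R : Type) [CommRing R] (M : Type) [AddCommGroup M] [Module R M] :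
    Set (PrimeSpectrum R) :=
  {p | ¬ Module.Free (Localization.AtPrime p.asIdeal) (LocalizedModule p.asIdeal.primeCompl M)}

/-- The nonfree locus of a subcategory of `mod R`. -/
def catNonfreeLocus (R : Type) [CommRing R] (𝒳 : Set (ModuleCat.{0} R)) :
    Set (PrimeSpectrum R) :=
  ⋃ M ∈ 𝒳, nonfreeLocus R M

/-- A resolving subcategory of the category of finitely generated `R`-modules:
closed under isomorphism, consisting of finitely generated modules, containing `R`,
closed under direct summands, extensions and kernels of epimorphisms. -/
structure IsResolving (R : Type) [CommRing R] (𝒳 : Set (ModuleCat.{0} R)) : Prop where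
  fg : ∀ M ∈ 𝒳, Module.Finite R M
  mem_of_iso : ∀ M N : ModuleCat.{0} R, Nonempty (M ≃ₗ[R] N) → M ∈ 𝒳 → N ∈ 𝒳
  ring_mem : ModuleCat.of R R ∈ 𝒳
  summand_mem : ∀ M N : ModuleCat.{0} R,
    (∃ (i : N →ₗ[R] M) (p : M →ₗ[R] N), p ∘ₗ i = LinearMap.id) → M ∈ 𝒳 → N ∈ 𝒳
  extension_mem : ∀ (L M N : ModuleCat.{0} R) (f : L →ₗ[R] M) (g : M →ₗ[R] N),
    Function.Injective f → Function.Surjective g → Function.Exact f g →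
      L ∈ 𝒳 → N ∈ 𝒳 → M ∈ 𝒳
  ker_epi_mem : ∀ (L M N : ModuleCat.{0} R) (f : L →ₗ[R] M) (g : M →ₗ[R] N),
    Function.Injective f → Function.Surjective g → Function.Exact f g →
      M ∈ 𝒳 → N ∈ 𝒳 → L ∈ 𝒳

/-- Membership in the additive closure `add 𝒴` of a subcategory `𝒴` of `mod S`:
direct summands of finite direct sums of modules in `𝒴`. -/
def memAdd (S : Type) [CommRing S] (𝒴 : Set (ModuleCat.{0} S)) (N : Type)
    [AddCommGroup N] [Module S N] : Prop :=
  ∃ (n : ℕ) (Y : Fin n → ModuleCat.{0} S), (∀ i, Y i ∈ 𝒴) ∧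
    ∃ (s : N →ₗ[S] ((i : Fin n) → Y i)) (r : ((i : Fin n) → Y i) →ₗ[S] N),
      r ∘ₗ s = LinearMap.id

/-- The subcategory `𝒳_p` of `mod R_p` consisting of localizations of modules in `𝒳`. -/
def locCat (R : Type) [CommRing R] (𝒳 : Set (ModuleCat.{0} R)) (p : PrimeSpectrum R) :
    Set (ModuleCat.{0} (Localization.AtPrime p.asIdeal)) :=
  {N | ∃ X ∈ 𝒳, Nonempty
    (N ≃ₗ[Localization.AtPrime p.asIdeal] LocalizedModule p.asIdeal.primeCompl X)}

/-- `κ(p) ∈ add_{R_p} 𝒳_p`. -/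
def kappaMemAdd (R : Type) [CommRing R] (𝒳 : Set (ModuleCat.{0} R)) (p : PrimeSpectrum R) :
    Prop :=
  memAdd (Localization.AtPrime p.asIdeal) (locCat R 𝒳 p)
    (IsLocalRing.ResidueField (Localization.AtPrime p.asIdeal))

/-- A specialization-closed subset of `Spec R`. -/
def SpecClosed (R : Type) [CommRing R] (Φ : Set (PrimeSpectrum R)) : Prop :=
  ∀ p ∈ Φ, ∀ q : PrimeSpectrum R, p.asIdeal ≤ q.asIdeal → q ∈ Φ

/-- `s(R)`: the set of primes `p` such that `R_p` is not a field. -/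
def nonFieldLocus (R : Type) [CommRing R] : Set (PrimeSpectrum R) :=
  {p | ¬ IsField (Localization.AtPrime p.asIdeal)}

/-- A (Noetherian) local ring is regular iff its maximal ideal is generated by
`dim` many elements. -/
def IsRegularLoc (A : Type) [CommRing A] [IsLocalRing A] : Prop :=
  ∃ (n : ℕ) (x : Fin n → A), ringKrullDim A = (n : ℕ) ∧
    Ideal.span (Set.range x) = IsLocalRing.maximalIdeal A

/-- The singular locus of `R`. -/
def singLocus (R : Type) [CommRing R] : Set (PrimeSpectrum R) :=
  {p | ¬ IsRegularLoc (Localization.AtPrime p.asIdeal)}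

/-- `V^{-1}(Φ)`: finitely generated modules whose nonfree locus is contained in `Φ`. -/
def Vinv (R : Type) [CommRing R] (Φ : Set (PrimeSpectrum R)) : Set (ModuleCat.{0} R) :=
  {M | Module.Finite R M ∧ nonfreeLocus R M ⊆ Φ}

/-- The depth of a module: supremum of lengths of regular sequences in the maximal ideal. -/
def seqDepth (R : Type) [CommRing R] [IsLocalRing R] (M : Type) [AddCommGroup M]
    [Module R M] : ℕ∞ :=
  sSup {n : ℕ∞ | ∃ rs : List R, (rs.length : ℕ∞) = n ∧
    (∀ r ∈ rs, r ∈ IsLocalRing.maximalIdeal R) ∧ RingTheory.Sequence.IsRegular M rs}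

/-- A local ring is Cohen–Macaulay if its depth equals its Krull dimension. -/
def IsCMLocalRing (R : Type) [CommRing R] [IsLocalRing R] : Prop :=
  (seqDepth R R : WithBot ℕ∞) = ringKrullDim R

/-- A module over a local ring is Cohen–Macaulay ("maximal Cohen–Macaulay") if its depth
equals the Krull dimension of the ring. -/
def IsCMModule (R : Type) [CommRing R] [IsLocalRing R] (M : Type) [AddCommGroup M]
    [Module R M] : Prop :=
  (seqDepth R M : WithBot ℕ∞) = ringKrullDim R

/-- The subcategory `CM(R)` of `mod R` of (maximal) Cohen–Macaulay modules. -/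
def CMcat (R : Type) [CommRing R] [IsLocalRing R] : Set (ModuleCat.{0} R) :=
  {M | Module.Finite R M ∧ IsCMModule R M}

/-- `V_CM^{-1}(Φ)`: Cohen–Macaulay modules whose nonfree locus is contained in `Φ`. -/
def VinvCM (R : Type) [CommRing R] [IsLocalRing R] (Φ : Set (PrimeSpectrum R)) :
    Set (ModuleCat.{0} R) :=
  {M | Module.Finite R M ∧ IsCMModule R M ∧ nonfreeLocus R M ⊆ Φ}

/-- `IsSyzygyOf R n M S` : `S` is an `n`-th syzygy of `M` in a minimal free resolution,
i.e. `S ≅ Ω^n M`. -/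
def IsSyzygyOf (R : Type) [CommRing R] [IsLocalRing R] :
    ℕ → ModuleCat.{0} R → ModuleCat.{0} R → Prop
  | 0, M, S => Nonempty (S ≃ₗ[R] M)
  | n + 1, M, S => ∃ (m : ℕ) (π : (Fin m → R) →ₗ[R] M), Function.Surjective π ∧
      LinearMap.ker π ≤ (IsLocalRing.maximalIdeal R) • (⊤ : Submodule R (Fin m → R)) ∧
      IsSyzygyOf R n (ModuleCat.of R (LinearMap.ker π)) S

/-- `IsTransposeOf R X M T` : `T` is (isomorphic to) the transpose `tr_X M` of `M`
with respect to `X`, computed from a minimal free presentation of `M`. -/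
def IsTransposeOf (R : Type) [CommRing R] [IsLocalRing R] (X : Type) [AddCommGroup X]
    [Module R X] (M : Type) [AddCommGroup M] [Module R M] (T : Type) [AddCommGroup T]
    [Module R T] : Prop :=
  ∃ (n m : ℕ) (dl : (Fin n → R) →ₗ[R] (Fin m → R)) (π : (Fin m → R) →ₗ[R] M),
    Function.Surjective π ∧ Function.Exact dl π ∧
    LinearMap.ker π ≤ (IsLocalRing.maximalIdeal R) • (⊤ : Submodule R (Fin m → R)) ∧
    LinearMap.ker dl ≤ (IsLocalRing.maximalIdeal R) • (⊤ : Submodule R (Fin n → R)) ∧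
    Nonempty (T ≃ₗ[R]
      (((Fin n → R) →ₗ[R] X) ⧸ LinearMap.range (LinearMap.lcomp R X dl)))

/-- `𝒳` is closed under tensor products. -/
def ClosedUnderTensor (R : Type) [CommRing R] (𝒳 : Set (ModuleCat.{0} R)) : Prop :=
  ∀ X ∈ 𝒳, ∀ Y ∈ 𝒳, ModuleCat.of R (TensorProduct R X Y) ∈ 𝒳

/-- `𝒳` is closed under (Auslander) transposes. -/
def ClosedUnderTranspose (R : Type) [CommRing R] [IsLocalRing R]
    (𝒳 : Set (ModuleCat.{0} R)) : Prop :=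
  ∀ M ∈ 𝒳, ∀ T : ModuleCat.{0} R, IsTransposeOf R R M T → T ∈ 𝒳


/-- The subcategory `add R` of direct summands of finitely generated free modules. -/
def addRCat (R : Type) [CommRing R] : Set (ModuleCat.{0} R) :=
  {M | ∃ (n : ℕ) (i : M →ₗ[R] (Fin n → R)) (p : (Fin n → R) →ₗ[R] M),
    p ∘ₗ i = LinearMap.id}

/-- A thick subcategory of `CM(R)`: closed under isomorphisms and direct summands, and
satisfying two-out-of-three for short exact sequences of Cohen-Macaulay modules. -/
structure IsThickCM (R : Type) [CommRing R] [IsLocalRing R]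
    (𝒳 : Set (ModuleCat.{0} R)) : Prop where
  subset_cm : 𝒳 ⊆ CMcat R
  mem_of_iso : ∀ M N : ModuleCat.{0} R, Nonempty (M ≃ₗ[R] N) → M ∈ 𝒳 → N ∈ 𝒳
  summand_mem : ∀ M N : ModuleCat.{0} R,
    (∃ (i : N →ₗ[R] M) (p : M →ₗ[R] N), p ∘ₗ i = LinearMap.id) → M ∈ 𝒳 → N ∈ 𝒳
  two_of_three : ∀ (L M N : ModuleCat.{0} R), L ∈ CMcat R → M ∈ CMcat R → N ∈ CMcat R →
    ∀ (f : L →ₗ[R] M) (g : M →ₗ[R] N),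
      Function.Injective f → Function.Surjective g → Function.Exact f g →
        ((L ∈ 𝒳 → M ∈ 𝒳 → N ∈ 𝒳) ∧ (L ∈ 𝒳 → N ∈ 𝒳 → M ∈ 𝒳) ∧ (M ∈ 𝒳 → N ∈ 𝒳 → L ∈ 𝒳))

/-- A local ring with infinite residue field has minimal multiplicity iff the square of the
maximal ideal equals `Q * m` for a parameter ideal `Q = (x_1, …, x_d)` generated by
`d = dim` many elements of `m`. -/
def HasMinimalMultiplicity (A : Type) [CommRing A] [IsLocalRing A] : Prop :=
  ∃ (n : ℕ) (x : Fin n → A), ringKrullDim A = (n : ℕ) ∧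
    (∀ i, x i ∈ IsLocalRing.maximalIdeal A) ∧
    (IsLocalRing.maximalIdeal A) ^ 2 =
      Ideal.span (Set.range x) * IsLocalRing.maximalIdeal A

/-! ### Lifting and minimal covers -/

/-- Lifting a map out of a projective module along a map that is only surjective onto
the image in question. -/
theorem exists_lift_of_forall_mem_range {R P A B : Type} [CommRing R]
    [AddCommGroup P] [Module R P] [Module.Projective R P]
    [AddCommGroup A] [Module R A] [AddCommGroup B] [Module R B]
    (φ : A →ₗ[R] B) (ψ : P →ₗ[R] B) (h : ∀ x, ∃ a, φ a = ψ x) :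
    ∃ l : P →ₗ[R] A, ∀ x, φ (l x) = ψ x := by
  obtain ⟨l, hl⟩ := Module.projective_lifting_property φ.rangeRestrict
    (ψ.codRestrict (LinearMap.range φ) h) φ.surjective_rangeRestrict
  exact ⟨l, fun x => congrArg Subtype.val (LinearMap.congr_fun hl x)⟩

/-- Nakayama: a map into a minimal cover is surjective as soon as it is surjective onto the
covered module. -/
theorem surjective_of_minimal_cover {R G F B : Type} [CommRing R] [IsLocalRing R]
    [AddCommGroup G] [Module R G] [AddCommGroup F] [Module R F] [Module.Finite R F]
    [AddCommGroup B] [Module R B]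
    (π : F →ₗ[R] B) (hπ : LinearMap.ker π ≤ (IsLocalRing.maximalIdeal R) • (⊤ : Submodule R F))
    (a : G →ₗ[R] F) (h : ∀ y, ∃ x, π (a x) = π y) : Function.Surjective a := by
  rw [← LinearMap.range_eq_top, ← top_le_iff]
  refine Submodule.le_of_le_smul_of_le_jacobson_bot (I := IsLocalRing.maximalIdeal R)
    Module.Finite.fg_top (IsLocalRing.maximalIdeal_le_jacobson _) fun y _ => ?_
  obtain ⟨x, hx⟩ := h y
  rw [← add_sub_cancel (a x) y]
  refine Submodule.add_mem_sup ⟨x, rfl⟩ (hπ ?_)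
  simp [hx]

/-- A finitely generated module over a local ring has a minimal free cover, obtained by lifting
a basis of `k ⊗ M`, with `k` the residue field. -/
theorem exists_minimal_cover (R M : Type) [CommRing R] [IsLocalRing R]
    [AddCommGroup M] [Module R M] [Module.Finite R M] :
    ∃ (m : ℕ) (π : (Fin m → R) →ₗ[R] M), Function.Surjective π ∧
      LinearMap.ker π ≤ (IsLocalRing.maximalIdeal R) • (⊤ : Submodule R (Fin m → R)) := by
  let k := IsLocalRing.ResidueField R
  let b := Module.finBasis k (k ⊗[R] M)
  obtain ⟨v, hv⟩ :=
    (TensorProduct.mk_surjective R M k IsLocalRing.residue_surjective).comp_left b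
  have hv' : ∀ i, (1 : k) ⊗ₜ[R] v i = b i := fun i => congrFun hv i
  refine ⟨_, Fintype.linearCombination R v, ?_, fun x hx => ?_⟩
  · rw [← LinearMap.range_eq_top, Fintype.range_linearCombination]
    exact IsLocalRing.span_eq_top_of_tmul_eq_basis v b hv'
  · rw [LinearMap.mem_ker, Fintype.linearCombination_apply] at hx
    have h0 : ∑ i, IsLocalRing.residue R (x i) • b i = 0 := by
      have := congrArg (TensorProduct.mk R k M 1) hx
      rw [map_sum, map_zero] at this
      rw [← this]
      refine Finset.sum_congr rfl fun i _ => ?_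
      rw [← hv', map_smul, TensorProduct.mk_apply]
      exact algebraMap_smul k (x i) _
    have h1 := Fintype.linearIndependent_iff.1 b.linearIndependent _ h0
    rw [pi_eq_sum_univ' x]
    refine Submodule.sum_mem _ fun i _ => Submodule.smul_mem_smul ?_ trivial
    exact (IsLocalRing.residue_eq_zero_iff _).1 (h1 i)

theorem exists_minimal_presentation (R M : Type) [CommRing R] [IsNoetherianRing R]
    [IsLocalRing R] [AddCommGroup M] [Module R M] [Module.Finite R M] :
    ∃ (n m : ℕ) (dl : (Fin n → R) →ₗ[R] (Fin m → R)) (π : (Fin m → R) →ₗ[R] M),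
      Function.Surjective π ∧ Function.Exact dl π ∧
      LinearMap.ker π ≤ (IsLocalRing.maximalIdeal R) • (⊤ : Submodule R (Fin m → R)) ∧
      LinearMap.ker dl ≤ (IsLocalRing.maximalIdeal R) • (⊤ : Submodule R (Fin n → R)) := by
  obtain ⟨m, π, hπ, hπm⟩ := exists_minimal_cover R M
  obtain ⟨n, ρ, hρ, hρm⟩ := exists_minimal_cover R (LinearMap.ker π)
  refine ⟨n, m, (LinearMap.ker π).subtype ∘ₗ ρ, π, hπ, ?_, hπm, ?_⟩
  · rw [LinearMap.exact_iff, LinearMap.range_comp, LinearMap.range_eq_top.2 hρ]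
    simp
  · rwa [LinearMap.ker_comp, Submodule.ker_subtype]

/-! ### Comparison of presentations -/

/-- For an arbitrary projective presentation `d` of `M` with finitely generated source, the cokernel
of `Hom(d, X)` is the transpose of `M`, computed from a minimal presentation `dl`, plus finitely
many copies of `X`.
The reason is that `d` is isomorphic to the direct sum of `dl`, an identity map
`K₀ → K₀` and a zero map `K₂ → 0`. -/
theorem exists_coker_lcomp_equiv {R X M F₀ F₁ G₀ G₁ : Type} [CommRing R] [IsNoetherianRing R]
    [IsLocalRing R] [AddCommGroup X] [Module R X] [AddCommGroup M] [Module R M]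
    [AddCommGroup F₀] [Module R F₀] [Module.Finite R F₀] [Module.Projective R F₀]
    [AddCommGroup F₁] [Module R F₁] [Module.Finite R F₁] [Module.Projective R F₁]
    [AddCommGroup G₀] [Module R G₀] [Module.Projective R G₀]
    [AddCommGroup G₁] [Module R G₁] [Module.Finite R G₁] [Module.Projective R G₁]
    (dl : F₁ →ₗ[R] F₀) (π : F₀ →ₗ[R] M) (hπ : Function.Surjective π)
    (hdl : Function.Exact dl π)
    (hπm : LinearMap.ker π ≤ (IsLocalRing.maximalIdeal R) • (⊤ : Submodule R F₀))
    (hdlm : LinearMap.ker dl ≤ (IsLocalRing.maximalIdeal R) • (⊤ : Submodule R F₁))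
    (d : G₁ →ₗ[R] G₀) (p : G₀ →ₗ[R] M) (hp : Function.Surjective p)
    (hd : Function.Exact d p) :
    ∃ n : ℕ, Nonempty (((G₁ →ₗ[R] X) ⧸ LinearMap.range (LinearMap.lcomp R X d)) ≃ₗ[R]
      ((F₁ →ₗ[R] X) ⧸ LinearMap.range (LinearMap.lcomp R X dl)) × (Fin n → X)) := by
  -- Split `G₀ = F₀ ⊕ K₀` along a comparison map `a₀`.
  obtain ⟨a₀, ha₀⟩ := exists_lift_of_forall_mem_range π p fun x => hπ _
  have ha₀s : Function.Surjective a₀ := surjective_of_minimal_cover π hπm a₀ fun y => by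
    obtain ⟨x, hx⟩ := hp (π y)
    exact ⟨x, by rw [ha₀, hx]⟩
  obtain ⟨β, hβ⟩ := exists_lift_of_forall_mem_range a₀ LinearMap.id fun x => ha₀s _
  replace hβ : ∀ x, a₀ (β x) = x := hβ
  let K₀ := LinearMap.ker a₀
  let ρ : G₀ →ₗ[R] K₀ := (LinearMap.id - β ∘ₗ a₀).codRestrict K₀ fun x => by
    simp [K₀, hβ]
  have hρ : ∀ x, x = β (a₀ x) + (ρ x : G₀) := fun x => by simp [ρ]
  have hρK : ∀ x : K₀, ρ x = x := fun x => by
    have hx : a₀ x = 0 := x.2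
    ext; simp [ρ, hx]
  have : Module.Projective R K₀ :=
    Module.Projective.of_split K₀.subtype ρ (LinearMap.ext hρK)
  -- `K₀` lies in `ker p`, so its inclusion into `G₀` lifts to `G₁`.
  obtain ⟨s, hs⟩ := exists_lift_of_forall_mem_range d K₀.subtype fun x => (hd _).1 (by
    have hx : a₀ x = 0 := x.2
    rw [← ha₀, Submodule.subtype_apply, hx, map_zero])
  replace hs : ∀ x : K₀, d (s x) = x := hs
  -- A comparison map `G₁ → F₁`, corrected so that it vanishes on the image of `s`.
  obtain ⟨a', ha'⟩ := exists_lift_of_forall_mem_range dl (a₀ ∘ₗ d) fun x => (hdl _).1 (by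
    rw [LinearMap.comp_apply, ha₀]; exact hd.apply_apply_eq_zero x)
  replace ha' : ∀ x, dl (a' x) = a₀ (d x) := ha'
  let a₁ : G₁ →ₗ[R] F₁ := a' ∘ₗ (LinearMap.id - s ∘ₗ ρ ∘ₗ d)
  have ha₁ : ∀ x, dl (a₁ x) = a₀ (d x) := fun x => by
    have hx : a₀ (ρ (d x)) = 0 := (ρ (d x)).2
    simp [a₁, ha', hs, hx]
  have ha₁s : ∀ x, a₁ (s x) = 0 := fun x => by simp [a₁, hs, hρK]
  have ha₁surj : Function.Surjective a₁ := surjective_of_minimal_cover dl hdlm a₁ fun y => by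
    obtain ⟨x, hx⟩ := (hd (β (dl y))).1 (by
      rw [← ha₀, hβ]; exact hdl.apply_apply_eq_zero y)
    exact ⟨x, by rw [ha₁, hx, hβ]⟩
  -- Now `(a₁, ρ ∘ d) : G₁ → F₁ ⊕ K₀` is a split surjection, with kernel `K₂ ⊆ ker d`.
  let q : G₁ →ₗ[R] F₁ × K₀ := a₁.prod (ρ ∘ₗ d)
  have hqs : Function.Surjective q := fun ⟨y, k⟩ => by
    obtain ⟨x, hx⟩ := ha₁surj y
    refine ⟨x + s (k - ρ (d x)), Prod.ext ?_ ?_⟩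
    · change a₁ (x + s (k - ρ (d x))) = y
      rw [map_add, ha₁s, hx, add_zero]
    · change ρ (d (x + s (k - ρ (d x)))) = k
      rw [map_add, map_add, hs, hρK, add_sub_cancel]
  obtain ⟨σ, hσ⟩ := exists_lift_of_forall_mem_range q LinearMap.id fun x => hqs _
  replace hσ : ∀ x, q (σ x) = x := hσ
  have hσ₁ : ∀ x, a₁ (σ x) = x.1 := fun x => congrArg Prod.fst (hσ x)
  have hσ₂ : ∀ x, ρ (d (σ x)) = x.2 := fun x => congrArg Prod.snd (hσ x)
  let K₂ := LinearMap.ker q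
  have hK₂ : ∀ x : K₂, d x = 0 := fun x => by
    have hx : q x = 0 := x.2
    have h1 : a₁ x = 0 := congrArg Prod.fst hx
    have h2 : ρ (d x) = 0 := congrArg Prod.snd hx
    rw [hρ (d x), ← ha₁, h1, h2]; simp
  let κ : G₁ →ₗ[R] K₂ := (LinearMap.id - σ ∘ₗ q).codRestrict K₂ fun x => by
    simp [K₂, hσ]
  have hκ : ∀ x, x = σ (q x) + (κ x : G₁) := fun x => by simp [κ]
  have hκσ : ∀ x, κ (σ x) = 0 := fun x => by ext; simp [κ, hσ]
  have hκK : ∀ x : K₂, κ x = x := fun x => by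
    have hx : q x = 0 := x.2
    ext; simp [κ, hx]
  have : Module.Projective R K₂ :=
    Module.Projective.of_split K₂.subtype κ (LinearMap.ext hκK)
  have : Module.Free R K₂ := Module.free_of_flat_of_isLocalRing
  have hdσ : ∀ y, d (σ (y, 0)) = β (dl y) := fun y => by
    rw [hρ (d (σ (y, 0))), hσ₂, ← ha₁, hσ₁]; simp
  -- Restriction of functionals to `F₁` and `K₂` induces the isomorphism.
  let i₁ : F₁ →ₗ[R] G₁ := σ ∘ₗ LinearMap.inl R F₁ K₀
  let Θ : (G₁ →ₗ[R] X) →ₗ[R]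
      ((F₁ →ₗ[R] X) ⧸ LinearMap.range (LinearMap.lcomp R X dl)) × (K₂ →ₗ[R] X) :=
    ((LinearMap.range (LinearMap.lcomp R X dl)).mkQ ∘ₗ LinearMap.lcomp R X i₁).prod
      (LinearMap.lcomp R X K₂.subtype)
  have hΘs : Function.Surjective Θ := fun ⟨y, θ⟩ => by
    obtain ⟨ψ, rfl⟩ := Submodule.mkQ_surjective _ y
    refine ⟨ψ ∘ₗ a₁ + θ ∘ₗ κ, Prod.ext ?_ ?_⟩
    · refine congrArg (Submodule.mkQ _) (LinearMap.ext fun x => ?_)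
      simp [i₁, hσ₁, hκσ]
    · refine LinearMap.ext fun x => ?_
      have hx : q x = 0 := x.2
      have h1 : a₁ x = 0 := congrArg Prod.fst hx
      simp [Θ, h1, hκK]
  have hΘk : LinearMap.ker Θ = LinearMap.range (LinearMap.lcomp R X d) := by
    ext φ
    constructor
    · intro h
      have h1 : (LinearMap.range (LinearMap.lcomp R X dl)).mkQ (φ ∘ₗ i₁) = 0 :=
        congrArg Prod.fst (LinearMap.mem_ker.1 h)
      have h2 : φ ∘ₗ K₂.subtype = 0 := congrArg Prod.snd (LinearMap.mem_ker.1 h)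
      obtain ⟨ψ, hψ⟩ := (Submodule.Quotient.mk_eq_zero _).1 h1
      refine ⟨ψ ∘ₗ a₀ + φ ∘ₗ σ ∘ₗ LinearMap.inr R F₁ K₀ ∘ₗ ρ, LinearMap.ext fun x => ?_⟩
      have h3 : φ (κ x) = 0 := LinearMap.congr_fun h2 (κ x)
      have h4 : ψ (dl (a₁ x)) = φ (σ (a₁ x, 0)) := LinearMap.congr_fun hψ (a₁ x)
      have h5 : q x = (a₁ x, 0) + (0, ρ (d x)) := by simp [q]
      conv_rhs => rw [hκ x, map_add, h3, h5, map_add, map_add, ← h4, ha₁]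
      simp
    · rintro ⟨Ψ, rfl⟩
      refine LinearMap.mem_ker.2 (Prod.ext ?_ ?_)
      · refine (Submodule.Quotient.mk_eq_zero _).2 ⟨Ψ ∘ₗ β, LinearMap.ext fun x => ?_⟩
        simp [i₁, hdσ]
      · refine LinearMap.ext fun x => ?_
        simp [Θ, hK₂]
  let n := Module.finrank R K₂
  let e₂ : K₂ ≃ₗ[R] (Fin n → R) := (Module.finBasis R K₂).equivFun
  refine ⟨n, ⟨Submodule.quotEquivOfEq _ _ hΘk.symm ≪≫ₗ Θ.quotKerEquivOfSurjective hΘs ≪≫ₗ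
    LinearEquiv.prodCongr (LinearEquiv.refl _ _)
      (LinearEquiv.congrLeft X R e₂ ≪≫ₗ LinearEquiv.piRing R X (Fin n) R)⟩⟩

/-! ### The horseshoe and the connecting map -/

/-- A block upper triangular map `d = [[dL, t], [0, dN]]` presenting `M`, as produced by the
horseshoe lemma: `p = (f ∘ πL, h)` with `h` a lift of `πN`. -/
theorem exists_horseshoe {R L M N A₀ A₁ B₀ B₁ : Type} [CommRing R]
    [AddCommGroup L] [Module R L] [AddCommGroup M] [Module R M] [AddCommGroup N] [Module R N]
    [AddCommGroup A₀] [Module R A₀] [AddCommGroup A₁] [Module R A₁]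
    [AddCommGroup B₀] [Module R B₀] [Module.Projective R B₀]
    [AddCommGroup B₁] [Module R B₁] [Module.Projective R B₁]
    (f : L →ₗ[R] M) (g : M →ₗ[R] N)
    (hf : Function.Injective f) (hg : Function.Surjective g) (hfg : Function.Exact f g)
    (dL : A₁ →ₗ[R] A₀) (πL : A₀ →ₗ[R] L) (hπL : Function.Surjective πL)
    (hdL : Function.Exact dL πL)
    (dN : B₁ →ₗ[R] B₀) (πN : B₀ →ₗ[R] N) (hπN : Function.Surjective πN)
    (hdN : Function.Exact dN πN) :
    ∃ (h : B₀ →ₗ[R] M) (t : B₁ →ₗ[R] A₀), (∀ y, f (πL (t y)) = -h (dN y)) ∧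
      Function.Surjective ((f ∘ₗ πL).coprod h) ∧
      Function.Exact ((dL.coprod t).prod (dN ∘ₗ LinearMap.snd R A₁ B₁))
        ((f ∘ₗ πL).coprod h) := by
  obtain ⟨h, hh⟩ := exists_lift_of_forall_mem_range g πN fun x => hg _
  obtain ⟨t, ht⟩ := exists_lift_of_forall_mem_range (f ∘ₗ πL) (-(h ∘ₗ dN)) fun y => by
    obtain ⟨l, hl⟩ := (hfg (-h (dN y))).1 (by
      rw [map_neg, hh, hdN.apply_apply_eq_zero, neg_zero])
    obtain ⟨a, rfl⟩ := hπL l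
    exact ⟨a, hl⟩
  replace ht : ∀ y, f (πL (t y)) = -h (dN y) := ht
  refine ⟨h, t, ht, fun m => ?_, fun ⟨a, b⟩ => ⟨fun hab => ?_, ?_⟩⟩
  · obtain ⟨b, hb⟩ := hπN (g m)
    obtain ⟨l, hl⟩ := (hfg (m - h b)).1 (by rw [map_sub, hh, hb, sub_self])
    obtain ⟨a, rfl⟩ := hπL l
    exact ⟨(a, b), by simp [hl]⟩
  · replace hab : f (πL a) + h b = 0 := by simpa using hab
    obtain ⟨y, rfl⟩ := (hdN b).1 (by
      have := congrArg g hab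
      rwa [map_add, hfg.apply_apply_eq_zero, zero_add, hh, map_zero] at this)
    obtain ⟨x, hx⟩ := (hdL (a - t y)).1 (hf (by
      rw [map_sub, map_sub, ht, sub_neg_eq_add, hab, map_zero]))
    exact ⟨(x, y), by simp [hx]⟩
  · rintro ⟨⟨x, y⟩, hxy⟩
    obtain ⟨rfl, rfl⟩ := Prod.ext_iff.1 hxy
    simp [ht, hdL.apply_apply_eq_zero]

/-- The right-hand half of the snake lemma for `Hom(-, X)` applied to a block upper triangular
presentation. The connecting map sends `l` to the class of `l ∘ πL ∘ t`. -/
theorem exists_snake {R X L M A₀ A₁ B₀ B₁ : Type} [CommRing R]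
    [AddCommGroup X] [Module R X]
    [AddCommGroup L] [Module R L] [AddCommGroup M] [Module R M]
    [AddCommGroup A₀] [Module R A₀] [AddCommGroup A₁] [Module R A₁]
    [AddCommGroup B₀] [Module R B₀] [AddCommGroup B₁] [Module R B₁]
    (f : L →ₗ[R] M) (dL : A₁ →ₗ[R] A₀) (πL : A₀ →ₗ[R] L) (hπL : Function.Surjective πL)
    (hdL : Function.Exact dL πL) (dN : B₁ →ₗ[R] B₀) (h : B₀ →ₗ[R] M) (t : B₁ →ₗ[R] A₀)
    (ht : ∀ y, f (πL (t y)) = -h (dN y)) (d : A₁ × B₁ →ₗ[R] A₀ × B₀)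
    (hd : d = (dL.coprod t).prod (dN ∘ₗ LinearMap.snd R A₁ B₁))
    (hp : Function.Surjective ((f ∘ₗ πL).coprod h))
    (hdp : Function.Exact d ((f ∘ₗ πL).coprod h)) :
    ∃ (u : (L →ₗ[R] X) →ₗ[R] ((B₁ →ₗ[R] X) ⧸ LinearMap.range (LinearMap.lcomp R X dN)))
      (v : ((B₁ →ₗ[R] X) ⧸ LinearMap.range (LinearMap.lcomp R X dN)) →ₗ[R]
        ((A₁ × B₁ →ₗ[R] X) ⧸ LinearMap.range (LinearMap.lcomp R X d)))
      (w : ((A₁ × B₁ →ₗ[R] X) ⧸ LinearMap.range (LinearMap.lcomp R X d)) →ₗ[R]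
        ((A₁ →ₗ[R] X) ⧸ LinearMap.range (LinearMap.lcomp R X dL))),
      Function.Exact (LinearMap.lcomp R X f) u ∧ Function.Exact u v ∧
      Function.Exact v w ∧ Function.Surjective w := by
  have hd' : ∀ x y, d (x, y) = (dL x + t y, dN y) := fun x y => by simp [hd]
  have hv : LinearMap.range (LinearMap.lcomp R X dN) ≤
      (LinearMap.range (LinearMap.lcomp R X d)).comap
        (LinearMap.lcomp R X (LinearMap.snd R A₁ B₁)) := by
    rintro _ ⟨ψ, rfl⟩
    exact ⟨ψ ∘ₗ LinearMap.snd R A₀ B₀, LinearMap.ext fun ⟨x, y⟩ => by simp [hd']⟩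
  have hw : LinearMap.range (LinearMap.lcomp R X d) ≤
      (LinearMap.range (LinearMap.lcomp R X dL)).comap
        (LinearMap.lcomp R X (LinearMap.inl R A₁ B₁)) := by
    rintro _ ⟨ψ, rfl⟩
    exact ⟨ψ ∘ₗ LinearMap.inl R A₀ B₀, LinearMap.ext fun x => by simp [hd']⟩
  refine ⟨Submodule.mkQ _ ∘ₗ LinearMap.lcomp R X (πL ∘ₗ t), Submodule.mapQ _ _ _ hv,
    Submodule.mapQ _ _ _ hw, fun l => ⟨fun hl => ?_, ?_⟩, fun z => ⟨fun hz => ?_, ?_⟩,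
    fun z => ⟨fun hz => ?_, ?_⟩, fun z => ?_⟩
  · obtain ⟨ψ, hψ⟩ := (Submodule.Quotient.mk_eq_zero _).1 hl
    -- `(l ∘ πL, -ψ)` kills the image of `d`, so it factors through `M`.
    replace hψ : ∀ y, ψ (dN y) = l (πL (t y)) := LinearMap.congr_fun hψ
    obtain ⟨μ, hμ⟩ := (LinearMap.exact_lcomp_of_exact_of_surjective X hdp hp
      ((l ∘ₗ πL).coprod (-ψ))).1 (LinearMap.ext fun ⟨x, y⟩ => by
        simp [hd', hψ, hdL.apply_apply_eq_zero])
    refine ⟨μ, LinearMap.ext fun c => ?_⟩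
    obtain ⟨a, rfl⟩ := hπL c
    simpa using LinearMap.congr_fun hμ (a, 0)
  · rintro ⟨μ, rfl⟩
    exact (Submodule.Quotient.mk_eq_zero _).2 ⟨-(μ ∘ₗ h), LinearMap.ext fun y => by simp [ht]⟩
  · obtain ⟨φ, rfl⟩ := Submodule.mkQ_surjective _ z
    obtain ⟨Ψ, hΨ⟩ := (Submodule.Quotient.mk_eq_zero _).1 hz
    replace hΨ : ∀ x y, Ψ (dL x + t y, dN y) = φ y := fun x y => by
      simpa [hd'] using LinearMap.congr_fun hΨ (x, y)
    obtain ⟨l, hl⟩ := (LinearMap.exact_lcomp_of_exact_of_surjective X hdL hπL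
      (Ψ ∘ₗ LinearMap.inl R A₀ B₀)).1 (LinearMap.ext fun x => by simpa using hΨ x 0)
    refine ⟨l, (Submodule.Quotient.eq _).2
      ⟨-(Ψ ∘ₗ LinearMap.inr R A₀ B₀), LinearMap.ext fun y => ?_⟩⟩
    have h1 : l (πL (t y)) = Ψ (t y, 0) := LinearMap.congr_fun hl (t y)
    have h2 : (dL 0 + t y, dN y) = (t y, 0) + (0, dN y) := by simp
    have h3 := hΨ 0 y
    rw [h2, map_add] at h3
    simp [h1, ← h3]
  · rintro ⟨l, rfl⟩
    refine (Submodule.Quotient.mk_eq_zero _).2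
      ⟨l ∘ₗ πL ∘ₗ LinearMap.fst R A₀ B₀, LinearMap.ext fun ⟨x, y⟩ => ?_⟩
    simp [hd', hdL.apply_apply_eq_zero]
  · obtain ⟨φ, rfl⟩ := Submodule.mkQ_surjective _ z
    obtain ⟨a, ha⟩ := (Submodule.Quotient.mk_eq_zero _).1 hz
    replace ha : ∀ x, a (dL x) = φ (x, 0) := LinearMap.congr_fun ha
    refine ⟨Submodule.mkQ _ (φ ∘ₗ LinearMap.inr R A₁ B₁ - a ∘ₗ t),
      (Submodule.Quotient.eq _).2
        ⟨-(a ∘ₗ LinearMap.fst R A₀ B₀), LinearMap.ext fun ⟨x, y⟩ => ?_⟩⟩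
    have h1 : φ (x, y) = φ (x, 0) + φ (0, y) := by rw [← map_add]; simp
    simp [hd', ha, h1]
    abel
  · rintro ⟨z, rfl⟩
    obtain ⟨φ, rfl⟩ := Submodule.mkQ_surjective _ z
    refine (Submodule.Quotient.mk_eq_zero _).2 ⟨0, LinearMap.ext fun x => ?_⟩
    simp
  · obtain ⟨φ, rfl⟩ := Submodule.mkQ_surjective _ z
    refine ⟨Submodule.mkQ _ (φ ∘ₗ LinearMap.fst R A₁ B₁),
      congrArg (Submodule.mkQ _) (LinearMap.ext fun x => ?_)⟩
    simp

/-- A short exact sequence `0 → L → M → N → 0` induces, for some `n ≥ 0`,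
an exact sequence `0 → Hom(N,X) → Hom(M,X) → Hom(L,X) → tr_X N → tr_X M ⊕ X^n → tr_X L → 0`. -/
theorem transposeOf_six_term_exact
    (R : Type) [CommRing R] [IsNoetherianRing R] [IsLocalRing R]
    (X : Type) [AddCommGroup X] [Module R X]
    (L M N : Type) [AddCommGroup L] [Module R L] [Module.Finite R L]
    [AddCommGroup M] [Module R M] [Module.Finite R M]
    [AddCommGroup N] [Module R N] [Module.Finite R N]
    (f : L →ₗ[R] M) (g : M →ₗ[R] N)
    (hf : Function.Injective f) (hg : Function.Surjective g) (hfg : Function.Exact f g) :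
    ∃ (n : ℕ) (TN TM TL : ModuleCat.{0} R),
      IsTransposeOf R X N TN ∧ IsTransposeOf R X M TM ∧ IsTransposeOf R X L TL ∧
      ∃ (u : (L →ₗ[R] X) →ₗ[R] TN) (v : ↥TN →ₗ[R] (↥TM × (Fin n → X)))
        (w : (↥TM × (Fin n → X)) →ₗ[R] TL),
        Function.Injective (LinearMap.lcomp R X g) ∧
        Function.Exact (LinearMap.lcomp R X g) (LinearMap.lcomp R X f) ∧
        Function.Exact (LinearMap.lcomp R X f) u ∧
        Function.Exact u v ∧
        Function.Exact v w ∧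
        Function.Surjective w := by
  obtain ⟨nL, mL, dL, πL, hπL, hdL, hπLm, hdLm⟩ := exists_minimal_presentation R L
  obtain ⟨nM, mM, dM, πM, hπM, hdM, hπMm, hdMm⟩ := exists_minimal_presentation R M
  obtain ⟨nN, mN, dN, πN, hπN, hdN, hπNm, hdNm⟩ := exists_minimal_presentation R N
  obtain ⟨h, t, ht, hp, hdp⟩ :=
    exists_horseshoe f g hf hg hfg dL πL hπL hdL dN πN hπN hdN
  obtain ⟨u, v, w, hu, hv, hw, hws⟩ :=
    exists_snake (X := X) f dL πL hπL hdL dN h t ht _ rfl hp hdp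
  obtain ⟨n, ⟨e⟩⟩ :=
    exists_coker_lcomp_equiv (X := X) dM πM hπM hdM hπMm hdMm _ _ hp hdp
  refine ⟨n, ModuleCat.of R (_ ⧸ LinearMap.range (LinearMap.lcomp R X dN)),
    ModuleCat.of R (_ ⧸ LinearMap.range (LinearMap.lcomp R X dM)),
    ModuleCat.of R (_ ⧸ LinearMap.range (LinearMap.lcomp R X dL)),
    ⟨nN, mN, dN, πN, hπN, hdN, hπNm, hdNm, ⟨LinearEquiv.refl _ _⟩⟩,
    ⟨nM, mM, dM, πM, hπM, hdM, hπMm, hdMm, ⟨LinearEquiv.refl _ _⟩⟩,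
    ⟨nL, mL, dL, πL, hπL, hdL, hπLm, hdLm, ⟨LinearEquiv.refl _ _⟩⟩,
    u, e.toLinearMap ∘ₗ v, w ∘ₗ e.symm.toLinearMap,
    LinearMap.lcomp_injective_of_surjective g hg,
    LinearMap.exact_lcomp_of_exact_of_surjective X hfg hg, hu, fun z => ?_, fun z => ?_, ?_⟩
  · rw [← hv z]
    exact e.map_eq_zero_iff
  · refine (hw (e.symm z)).trans ⟨?_, ?_⟩
    · rintro ⟨y, hy⟩
      exact ⟨y, by rw [LinearMap.comp_apply, hy]; exact e.apply_symm_apply z⟩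
    · rintro ⟨y, rfl⟩
      exact ⟨y, (e.symm_apply_apply _).symm⟩
  · exact hws.comp e.symm.surjective

end
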